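/- arXiv:2503.03213 — 2 statements merged into one kernel-verified Lean document; each statement's English description precedes it below -/
import Mathlib

section
/- (Key lemma in the proof of Theorem 5.2.) For the dense-to-sparse gating MoE with linear router, any bounded Lipschitz expert function ℰ, any k ≥ k*, and every r ≥ 1: for every ε > 0 there exists a mixing measure G ∈ G_k(Θ) with 0 < L_{3,r}(G, G*) ≤ ε and ‖g_G − g_{G*}‖_{L²(μ)} ≤ ε · L_{3,r}(G, G*); in particular lim_{ε→0} inf{‖g_G − g_{G*}‖_{L²(μ)} / L_{3,r}(G, G*) : G ∈ G_k(Θ), L_{3,r}(G, G*) ≤ ε} = 0. This holds irrespective of the expert structure, due to the interaction between the temperature and the gating parameters. -/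
open scoped BigOperators InnerProductSpace Classical
open MeasureTheory Finset Real

noncomputable section

abbrev Euc (n : ℕ) := EuclideanSpace ℝ (Fin n)

/-- Dense-to-sparse gating MoE regression function with linear router and temperature `τ`. -/
def dsMoe {d q : ℕ} (Ex : Euc d → Euc q → ℝ) {m : ℕ}
    (β : Fin m → ℝ) (ω : Fin m → Euc d) (τ : ℝ) (η : Fin m → Euc q) (x : Euc d) : ℝ :=
  ∑ i, (Real.exp ((⟪ω i, x⟫_ℝ + β i) / τ) / ∑ j, Real.exp ((⟪ω j, x⟫_ℝ + β j) / τ)) *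
    Ex x (η i)

/-- Euclidean distance between atoms `θ = (ω, τ, η)` and `θ' = (ω', τ', η')`. -/
def pDist3 {d q : ℕ} (ω : Euc d) (τ : ℝ) (η : Euc q) (ω' : Euc d) (τ' : ℝ) (η' : Euc q) : ℝ :=
  Real.sqrt (‖ω - ω'‖ ^ 2 + |τ - τ'| ^ 2 + ‖η - η'‖ ^ 2)

/-- Voronoi cell `A_j` generated by the `j`-th ground-truth atom. -/
def cell3 {d q : ℕ} {m K : ℕ} (ω : Fin m → Euc d) (τ : ℝ) (η : Fin m → Euc q)
    (ωs : Fin K → Euc d) (τs : ℝ) (ηs : Fin K → Euc q) (j : Fin K) : Finset (Fin m) :=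
  univ.filter fun i => ∀ ℓ, ℓ ≠ j →
    pDist3 (ω i) τ (η i) (ωs j) τs (ηs j) ≤ pDist3 (ω i) τ (η i) (ωs ℓ) τs (ηs ℓ)

/-- The Voronoi loss `L_{3,r}(G, G*)`. -/
def vorLoss3 {d q : ℕ} {m K : ℕ} (r : ℝ) (β : Fin m → ℝ) (ω : Fin m → Euc d) (τ : ℝ)
    (η : Fin m → Euc q) (βs : Fin K → ℝ) (ωs : Fin K → Euc d) (τs : ℝ)
    (ηs : Fin K → Euc q) : ℝ :=
  (∑ j, |(∑ i ∈ cell3 ω τ η ωs τs ηs j, Real.exp (β i / τ)) - Real.exp (βs j / τs)|)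
  + ∑ j, ∑ i ∈ cell3 ω τ η ωs τs ηs j,
      Real.exp (β i / τ) * (‖ω i - ωs j‖ ^ r + |τ - τs| ^ r + ‖η i - ηs j‖ ^ r)

/-!
Multiplying all `βᵢ`, all `ωᵢ` and the temperature `τ` by a common factor `c ≠ 0` leaves the gate,
and hence the regression function of every expert, unchanged. Rescaling `G*` by `c > 1` close to `1`
therefore yields mixing measures that represent the same function as `G*` and converge to `G*`, while
their loss is positive because their temperature differs from `τ*`.
-/

section Rescaling

open Filter Topology

variable {d q m K : ℕ}

theorem dsMoe_smul (Ex : Euc d → Euc q → ℝ) (β : Fin m → ℝ) (ω : Fin m → Euc d) (τ : ℝ)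
    (η : Fin m → Euc q) {c : ℝ} (hc : c ≠ 0) :
    dsMoe Ex (c • β) (c • ω) (c * τ) η = dsMoe Ex β ω τ η := by
  funext x
  simp only [dsMoe, Pi.smul_apply, smul_eq_mul, real_inner_smul_left, ← mul_add,
    mul_div_mul_left _ _ hc]

theorem pDist3_self (ω : Euc d) (τ : ℝ) (η : Euc q) : pDist3 ω τ η ω τ η = 0 := by
  simp [pDist3]

theorem pDist3_pos {ω ω' : Euc d} {τ τ' : ℝ} {η η' : Euc q} (h : (ω, τ, η) ≠ (ω', τ', η')) :
    0 < pDist3 ω τ η ω' τ' η' := by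
  refine Real.sqrt_pos.2 (lt_of_le_of_ne (by positivity) fun h₀ => h ?_)
  have hω : ‖ω - ω'‖ ^ 2 = 0 := by nlinarith [sq_nonneg |τ - τ'|, sq_nonneg ‖η - η'‖]
  have hτ : |τ - τ'| ^ 2 = 0 := by nlinarith [sq_nonneg ‖η - η'‖]
  have hη : ‖η - η'‖ ^ 2 = 0 := by linarith
  simp only [sq_eq_zero_iff, norm_eq_zero, abs_eq_zero, sub_eq_zero] at hω hτ hη
  rw [hω, hτ, hη]

theorem continuous_pDist3_left (ω' : Euc d) (τ' : ℝ) (η' : Euc q) :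
    Continuous fun θ : Euc d × ℝ × Euc q => pDist3 θ.1 θ.2.1 θ.2.2 ω' τ' η' := by
  unfold pDist3
  fun_prop

theorem eventually_pDist3_lt {θ₁ θ₂ : Euc d × ℝ × Euc q} (h : θ₁ ≠ θ₂) :
    ∀ᶠ θ in 𝓝 θ₁, pDist3 θ.1 θ.2.1 θ.2.2 θ₁.1 θ₁.2.1 θ₁.2.2 <
      pDist3 θ.1 θ.2.1 θ.2.2 θ₂.1 θ₂.2.1 θ₂.2.2 := by
  refine (continuous_pDist3_left ..).continuousAt.eventually_lt
    (continuous_pDist3_left ..).continuousAt ?_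
  rw [pDist3_self]
  exact pDist3_pos h

theorem exists_mem_cell3 [NeZero K] (ω : Fin m → Euc d) (τ : ℝ) (η : Fin m → Euc q)
    (ωs : Fin K → Euc d) (τs : ℝ) (ηs : Fin K → Euc q) (i : Fin m) :
    ∃ j, i ∈ cell3 ω τ η ωs τs ηs j := by
  obtain ⟨j, hj⟩ := Finite.exists_min fun j => pDist3 (ω i) τ (η i) (ωs j) τs (ηs j)
  exact ⟨j, mem_filter.2 ⟨mem_univ i, fun ℓ _ => hj ℓ⟩⟩

theorem cell3_eq_singleton {ω ωs : Fin K → Euc d} {τ τs : ℝ} {η ηs : Fin K → Euc q}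
    (h : ∀ i ℓ, ℓ ≠ i →
      pDist3 (ω i) τ (η i) (ωs i) τs (ηs i) < pDist3 (ω i) τ (η i) (ωs ℓ) τs (ηs ℓ))
    (j : Fin K) : cell3 ω τ η ωs τs ηs j = {j} := by
  ext i
  simp only [cell3, mem_filter, mem_univ, true_and, mem_singleton]
  constructor
  · intro hi
    by_contra hij
    exact (h i j (Ne.symm hij)).not_ge (hi i hij)
  · rintro rfl ℓ hℓ
    exact (h i ℓ hℓ).le

theorem eventually_cell3_eq_singleton {ωs : Fin K → Euc d} {ηs : Fin K → Euc q}
    (hinj : Function.Injective fun j => (ωs j, ηs j)) (τs : ℝ) :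
    ∀ᶠ G : (Fin K → Euc d) × ℝ × (Fin K → Euc q) in 𝓝 (ωs, τs, ηs),
      ∀ j, cell3 G.1 G.2.1 G.2.2 ωs τs ηs j = {j} := by
  have hlt : ∀ᶠ G : (Fin K → Euc d) × ℝ × (Fin K → Euc q) in 𝓝 (ωs, τs, ηs),
      ∀ i ℓ, ℓ ≠ i → pDist3 (G.1 i) G.2.1 (G.2.2 i) (ωs i) τs (ηs i) <
        pDist3 (G.1 i) G.2.1 (G.2.2 i) (ωs ℓ) τs (ηs ℓ) := by
    simp only [eventually_all]
    intro i ℓ hℓ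
    have hne : (ωs i, τs, ηs i) ≠ (ωs ℓ, τs, ηs ℓ) := fun h =>
      hℓ (hinj (by simp_all only [Prod.mk.injEq, true_and]))
    have hatom : Tendsto (fun G : (Fin K → Euc d) × ℝ × (Fin K → Euc q) =>
        (G.1 i, G.2.1, G.2.2 i)) (𝓝 (ωs, τs, ηs)) (𝓝 (ωs i, τs, ηs i)) :=
      Continuous.tendsto' (by fun_prop) _ _ rfl
    exact hatom.eventually (eventually_pDist3_lt hne)
  filter_upwards [hlt] with G hG using cell3_eq_singleton hG

theorem vorLoss3_pos [NeZero m] [NeZero K] (r : ℝ) (β : Fin m → ℝ) (ω : Fin m → Euc d)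
    {τ τs : ℝ} (η : Fin m → Euc q) (βs : Fin K → ℝ) (ωs : Fin K → Euc d) (ηs : Fin K → Euc q)
    (hτ : τ ≠ τs) : 0 < vorLoss3 r β ω τ η βs ωs τs ηs := by
  have : 0 < |τ - τs| := abs_pos.2 (sub_ne_zero.2 hτ)
  obtain ⟨j, hj⟩ := exists_mem_cell3 ω τ η ωs τs ηs 0
  refine add_pos_of_nonneg_of_pos (by positivity)
    (sum_pos' (fun _ _ => by positivity) ⟨j, mem_univ j, ?_⟩)
  exact sum_pos (fun _ _ => by positivity) ⟨0, hj⟩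

theorem vorLoss3_of_cell3_eq_singleton (r : ℝ) (β βs : Fin K → ℝ) {ω ωs : Fin K → Euc d}
    {τ τs : ℝ} {η ηs : Fin K → Euc q} (h : ∀ j, cell3 ω τ η ωs τs ηs j = {j}) :
    vorLoss3 r β ω τ η βs ωs τs ηs =
      ∑ j, |Real.exp (β j / τ) - Real.exp (βs j / τs)| +
        ∑ j, Real.exp (β j / τ) *
          (‖ω j - ωs j‖ ^ r + |τ - τs| ^ r + ‖η j - ηs j‖ ^ r) := by
  simp only [vorLoss3, h, sum_singleton]

theorem tendsto_vorLoss3_nhds_zero {r : ℝ} (hr : 0 < r) (βs : Fin K → ℝ) {ωs : Fin K → Euc d}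
    {τs : ℝ} {ηs : Fin K → Euc q} (hτs : τs ≠ 0)
    (hinj : Function.Injective fun j => (ωs j, ηs j)) :
    Tendsto (fun G : (Fin K → ℝ) × (Fin K → Euc d) × ℝ × (Fin K → Euc q) =>
      vorLoss3 r G.1 G.2.1 G.2.2.1 G.2.2.2 βs ωs τs ηs) (𝓝 (βs, ωs, τs, ηs)) (𝓝 0) := by
  have hcell := (continuous_snd.tendsto (βs, ωs, τs, ηs)).eventually
    (eventually_cell3_eq_singleton hinj τs)
  refine Tendsto.congr' (hcell.mono fun G hG =>
    (vorLoss3_of_cell3_eq_singleton r G.1 βs hG).symm) ?_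
  have hcont : ContinuousAt (fun G : (Fin K → ℝ) × (Fin K → Euc d) × ℝ × (Fin K → Euc q) =>
      ∑ j, |Real.exp (G.1 j / G.2.2.1) - Real.exp (βs j / τs)| +
        ∑ j, Real.exp (G.1 j / G.2.2.1) * (‖G.2.1 j - ωs j‖ ^ r + |G.2.2.1 - τs| ^ r +
          ‖G.2.2.2 j - ηs j‖ ^ r)) (βs, ωs, τs, ηs) := by
    fun_prop (disch := simp [hr.le])
  simpa [Real.zero_rpow hr.ne'] using hcont.tendsto

theorem dense_to_sparse_moe_ratio_vanishes_general [NeZero K]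
    {Θ : Set (ℝ × Euc d × ℝ × Euc q)} {βs : Fin K → ℝ} {ωs : Fin K → Euc d} {τs : ℝ}
    {ηs : Fin K → Euc q} (hτs : 0 < τs) (hΘs : ∀ j, (βs j, ωs j, τs, ηs j) ∈ interior Θ)
    (hdistinct : Function.Injective fun j => (ωs j, ηs j)) {r : ℝ} (hr : 0 < r)
    {ε : ℝ} (hε : 0 < ε) :
    ∃ (β : Fin K → ℝ) (ω : Fin K → Euc d) (τ : ℝ) (η : Fin K → Euc q),
      (∀ i, (β i, ω i, τ, η i) ∈ Θ) ∧ 0 < τ ∧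
      0 < vorLoss3 r β ω τ η βs ωs τs ηs ∧ vorLoss3 r β ω τ η βs ωs τs ηs ≤ ε ∧
      ∀ Ex : Euc d → Euc q → ℝ, dsMoe Ex β ω τ η = dsMoe Ex βs ωs τs ηs := by
  have hpath : Tendsto (fun c : ℝ => (c • βs, c • ωs, c * τs, ηs)) (𝓝 1)
      (𝓝 (βs, ωs, τs, ηs)) :=
    Continuous.tendsto' (by fun_prop) _ _ (by simp only [one_smul, one_mul])
  have hmem : ∀ᶠ c : ℝ in 𝓝 1, ∀ i, (c • βs i, c • ωs i, c * τs, ηs i) ∈ Θ := by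
    refine eventually_all.2 fun i => ?_
    have hatom : Tendsto (fun c : ℝ => (c • βs i, c • ωs i, c * τs, ηs i)) (𝓝 1)
        (𝓝 (βs i, ωs i, τs, ηs i)) :=
      Continuous.tendsto' (by fun_prop) _ _ (by simp only [one_smul, one_mul])
    exact hatom (mem_interior_iff_mem_nhds.1 (hΘs i))
  have hloss :=
    ((tendsto_vorLoss3_nhds_zero hr βs hτs.ne' hdistinct).comp hpath).eventually_lt_const hε
  obtain ⟨c, ⟨hcΘ, hcε⟩, hc : 1 < c⟩ :=
    (((hmem.and hloss).filter_mono nhdsWithin_le_nhds).and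
      (self_mem_nhdsWithin : Set.Ioi (1 : ℝ) ∈ 𝓝[>] 1)).exists
  have hτ : c * τs ≠ τs := (lt_mul_of_one_lt_left hτs hc).ne'
  exact ⟨c • βs, c • ωs, c * τs, ηs, hcΘ, by positivity, vorLoss3_pos r _ _ _ _ _ _ hτ, hcε.le,
    fun Ex => dsMoe_smul Ex βs ωs τs ηs (by positivity)⟩

end Rescaling

/-- **Key lemma in the proof of Theorem 5.2.**  For the dense-to-sparse gating MoE with
linear router, any bounded Lipschitz expert `ℰ`, any `k ≥ k*` and every `r ≥ 1`:
for every `ε > 0` there is `G ∈ G_k(Θ)` with `0 < L_{3,r}(G, G*) ≤ ε` and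
`‖g_G − g_{G*}‖_{L²(μ)} ≤ ε ⋅ L_{3,r}(G, G*)`; hence the infimum of the ratio near `G*`
vanishes, irrespective of the expert structure. -/
theorem dense_to_sparse_moe_ratio_vanishes
    (d q k K : ℕ) (hd : 1 ≤ d) (hq : 1 ≤ q)
    (Ex : Euc d → Euc q → ℝ)
    (hbound : ∃ M : ℝ, ∀ x η, |Ex x η| ≤ M)
    (hlip : ∃ L : ℝ, ∀ x η η', |Ex x η - Ex x η'| ≤ L * ‖η - η'‖)
    (Θ : Set (ℝ × Euc d × ℝ × Euc q)) (hΘ : IsCompact Θ)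
    (hΘτ : ∀ p ∈ Θ, 0 < p.2.2.1)
    (X : Set (Euc d)) (hX : Bornology.IsBounded X)
    (μ : Measure (Euc d)) [IsProbabilityMeasure μ] (hμX : μ X = 1)
    (βs : Fin (K + 1) → ℝ) (ωs : Fin (K + 1) → Euc d) (τs : ℝ) (ηs : Fin (K + 1) → Euc q)
    (hτs : 0 < τs)
    (hΘs : ∀ j, (βs j, ωs j, τs, ηs j) ∈ interior Θ)
    (hdistinct : Function.Injective fun j => (ωs j, ηs j))
    (hzero : βs (Fin.last K) = 0 ∧ ωs (Fin.last K) = 0)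
    (hnonzero : ∃ j, ωs j ≠ 0)
    (hk : K + 1 ≤ k)
    (r : ℝ) (hr : 1 ≤ r) :
    ∀ ε : ℝ, 0 < ε →
      ∃ (m : ℕ), 1 ≤ m ∧ m ≤ k ∧
        ∃ (β : Fin m → ℝ) (ω : Fin m → Euc d) (τ : ℝ) (η : Fin m → Euc q),
          (∀ i, (β i, ω i, τ, η i) ∈ Θ) ∧ 0 < τ ∧
          0 < vorLoss3 r β ω τ η βs ωs τs ηs ∧
          vorLoss3 r β ω τ η βs ωs τs ηs ≤ ε ∧
          Real.sqrt (∫ x in X, (dsMoe Ex β ω τ η x - dsMoe Ex βs ωs τs ηs x) ^ 2 ∂μ) ≤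
            ε * vorLoss3 r β ω τ η βs ωs τs ηs := by
  intro ε hε
  obtain ⟨β, ω, τ, η, hΘ', hτ, hpos, hle, heq⟩ :=
    dense_to_sparse_moe_ratio_vanishes_general hτs hΘs hdistinct (zero_lt_one.trans_le hr) hε
  exact ⟨K + 1, K.succ_pos, hk, β, ω, τ, η, hΘ', hτ, hpos, hle, by
    simpa only [heq Ex, sub_self, zero_pow two_ne_zero, integral_zero, Real.sqrt_zero] using
      (mul_pos hε hpos).le⟩

end
end

section
/- (Proposition 3.1.) Consider i.i.d. data (X_1, Y_1), …, (X_n, Y_n) with X_i ~ μ and Y_i = f_{G*}(X_i) + ε_i, where ε_i | X_i ~ N(0, ν) for a fixed ν > 0. Let Ĝ_n : (ℝ^d × ℝ)^n → G_k(Θ) be any measurable least squares estimator, i.e., Ĝ_n((x_i, y_i)_{i=1}^n) minimizes Σ_{i=1}^n (y_i − f_G(x_i))² over G ∈ G_k(Θ). Then ‖f_{Ĝ_n} − f_{G*}‖_{L²(μ)} = O_P(√(log n / n)): for every ε > 0 there exists C > 0 such that for all n ≥ 2, P(‖f_{Ĝ_n((X_i, Y_i)_{i=1}^n)} − f_{G*}‖_{L²(μ)}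 > C · √(log(n)/n)) ≤ ε. -/
open scoped BigOperators InnerProductSpace Classical
open MeasureTheory Finset Real

noncomputable section

/-- The softmax-gating mixture-of-experts regression function. -/
def moe {d q : ℕ} (Ex : Euc d → Euc q → ℝ) {m : ℕ}
    (β : Fin m → ℝ) (ω : Fin m → Euc d) (η : Fin m → Euc q) (x : Euc d) : ℝ :=
  ∑ i, (Real.exp (⟪ω i, x⟫_ℝ + β i) / ∑ j, Real.exp (⟪ω j, x⟫_ℝ + β j)) * Ex x (η i)

/-- Parameter space of mixing measures with between `1` and `k` atoms: `⟨m, p⟩` encodes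
`G = ∑_{i=1}^{m+1} exp(β_i) δ_{(ω_i, η_i)}`. -/
def ParamSpaceM (d q k : ℕ) : Type :=
  Σ m : Fin k, (Fin ((m : ℕ) + 1) → ℝ × Euc d × Euc q)

instance (d q k : ℕ) : MeasurableSpace (ParamSpaceM d q k) := by
  unfold ParamSpaceM; infer_instance

/-- The regression function determined by an element of the parameter space. -/
def moeOf {d q k : ℕ} (Ex : Euc d → Euc q → ℝ) (p : ParamSpaceM d q k) (x : Euc d) : ℝ :=
  moe Ex (fun i => (p.2 i).1) (fun i => (p.2 i).2.1) (fun i => (p.2 i).2.2) x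

/-- Joint law of one data point `(X, Y)` with `X ∼ μ` and `Y | X ∼ N(f(X), v)`. -/
def jointLaw {d : ℕ} (μ : Measure (Euc d)) (f : Euc d → ℝ) (v : NNReal) :
    Measure (Euc d × ℝ) :=
  μ.bind fun x => (ProbabilityTheory.gaussianReal (f x) v).map (Prod.mk x)

/-!
An estimator whose empirical risk is at most that of the truth `f` forces
`∑ i, (e i ^ 2 - (e i - g (x i)) ^ 2) ≥ 0`, where `g` is its error and `e i` is the noise. For a
fixed bounded `g`, the exponential moment of a small multiple of one summand is at most
`exp (- c * ∫ g ^ 2)`, so by Chernoff's bound the event has probability at most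
`exp (- c * n * ∫ g ^ 2)`. This survives replacing `g` by all its perturbations of size `δ = 1 / n`,
since these raise the log-moment of a summand by `O(δ)`, hence the total by `O(1)`.

The regression function is Lipschitz in the parameters, so polynomially many cells of parameters
with oscillation `1 / n` suffice to cover the model. The union bound then costs a factor
`n ^ a`, which is beaten as soon as `∫ g ^ 2` exceeds a large multiple of `log n / n`.

The experts are not assumed measurable in `x`. All the exponential moments are therefore bounded as
lower integrals, for which the needed halves of Tonelli's theorem hold without measurability.
-/

section Covering

open Metric

variable {F : Type*} [NormedAddCommGroup F] [NormedSpace ℝ F] [FiniteDimensional ℝ F]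

variable (F) in
lemma exists_card_isCover_closedBall_half :
    ∃ N : ℕ, ∀ (x : F) (r : NNReal), ∃ C : Finset F, #C ≤ N ∧
      IsCover (r * 2⁻¹) (closedBall x r) C := by
  have : ProperSpace F := FiniteDimensional.proper ℝ F
  obtain ⟨T, -, hT, hcov⟩ :=
    exists_finite_isCover_of_isCompact (ε := 2⁻¹) (by simp) (isCompact_closedBall (0 : F) 1)
  lift T to Finset F using hT
  refine ⟨#T, fun x r ↦ ⟨T.image (fun t ↦ x + r • t), card_image_le, ?_⟩⟩
  have hlip : LipschitzWith r (fun t : F ↦ x + r • t) :=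
    LipschitzWith.of_dist_le_mul fun s t ↦ by
      rw [dist_add_left, NNReal.smul_def, NNReal.smul_def, dist_smul₀, NNReal.norm_eq]
  have himage : closedBall x r = (fun t : F ↦ x + r • t) '' closedBall 0 1 := by
    rw [← affinity_unitClosedBall r.coe_nonneg]
    simp only [← Set.image_smul, ← Set.image_vadd, Set.image_image]
    rfl
  rw [himage, coe_image]
  exact hcov.image_lipschitz hlip

variable (F) in
lemma exists_card_isCover_closedBall_pow :
    ∃ N : ℕ, ∀ (j : ℕ) (x : F) (r : NNReal), ∃ C : Finset F, #C ≤ N ^ j ∧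
      IsCover (r * 2⁻¹ ^ j) (closedBall x r) C := by
  obtain ⟨N, hN⟩ := exists_card_isCover_closedBall_half F
  refine ⟨N, fun j ↦ ?_⟩
  induction j with
  | zero => exact fun x r ↦ ⟨{x}, by simp, by simp [isCover_iff_subset_iUnion_closedBall]⟩
  | succ j ih =>
    intro x r
    obtain ⟨C, hC, hcov⟩ := hN x r
    choose D hD hDcov using fun y ↦ ih y (r * 2⁻¹)
    refine ⟨C.biUnion D, ?_, ?_⟩
    · calc #(C.biUnion D) ≤ #C * N ^ j := card_biUnion_le_card_mul _ _ _ fun y _ ↦ hD y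
        _ ≤ N ^ (j + 1) := by rw [pow_succ']; gcongr
    · simp only [isCover_iff_subset_iUnion_closedBall] at hcov hDcov ⊢
      intro z hz
      obtain ⟨y, hy, hzy⟩ := Set.mem_iUnion₂.1 (hcov hz)
      obtain ⟨w, hw, hzw⟩ := Set.mem_iUnion₂.1 (hDcov y hzy)
      rw [mul_assoc, ← pow_succ'] at hzw
      exact Set.mem_iUnion₂.2 ⟨w, mem_biUnion.2 ⟨y, hy, hw⟩, hzw⟩

lemma exists_card_isCover_le_of_isBounded {s : Set F} (hs : Bornology.IsBounded s) :
    ∃ A a : ℕ, ∀ n : ℕ, n ≠ 0 → ∃ C : Finset F, #C ≤ A * n ^ a ∧ IsCover (n : NNReal)⁻¹ s C := by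
  obtain ⟨R, hR⟩ := hs.subset_closedBall 0
  obtain ⟨N, hN⟩ := exists_card_isCover_closedBall_pow F
  obtain ⟨B, hB⟩ := exists_nat_gt (max R 0)
  have hB0 : B ≠ 0 := by rintro rfl; simp at hB
  refine ⟨(2 * B) ^ N, N, fun n hn ↦ ?_⟩
  set j := Nat.log 2 (B * n) + 1
  obtain ⟨C, hC, hcov⟩ := hN j 0 B
  refine ⟨C, ?_, (hcov.anti ?_).mono_radius ?_⟩
  · calc #C ≤ N ^ j := hC
      _ ≤ (2 ^ N) ^ j := by gcongr; exact Nat.lt_two_pow_self.le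
      _ = (2 ^ j) ^ N := pow_right_comm 2 N j
      _ = (2 * 2 ^ Nat.log 2 (B * n)) ^ N := by rw [pow_succ']
      _ ≤ (2 * (B * n)) ^ N := by gcongr; exact Nat.pow_log_le_self 2 (by positivity)
      _ = (2 * B) ^ N * n ^ N := by rw [← mul_assoc, mul_pow]
  · exact hR.trans (closedBall_subset_closedBall ((le_max_left R 0).trans hB.le))
  · have hlt : ((B * n : ℕ) : NNReal) < 2 ^ j := by
      exact_mod_cast Nat.lt_pow_succ_log_self one_lt_two (B * n)
    have hn' : (0 : NNReal) < n := by positivity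
    rw [inv_pow, ← div_eq_mul_inv, div_le_iff₀ (by positivity), ← div_eq_inv_mul,
      le_div_iff₀ hn']
    exact_mod_cast hlt.le

end Covering

section Gaussian

open ProbabilityTheory

lemma exp_add_mul_abs_le {δ : ℝ} (hδ₀ : 0 ≤ δ) (hδ₁ : δ ≤ 1) (x y : ℝ) :
    exp (x + δ * |y|) ≤ exp x + δ * (exp (x + y) + exp (x - y)) := by
  have hconv : exp (δ * |y|) ≤ δ * exp |y| + (1 - δ) := by
    simpa using convexOn_exp.2 (Set.mem_univ |y|) (Set.mem_univ (0 : ℝ)) hδ₀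
      (sub_nonneg.2 hδ₁) (by ring)
  calc exp (x + δ * |y|) = exp x * exp (δ * |y|) := exp_add _ _
    _ ≤ exp x * (1 + δ * (exp y + exp (-y))) := by
        have habs : δ * exp |y| ≤ δ * (exp y + exp (-y)) := by gcongr; exact exp_abs_le y
        gcongr
        linarith
    _ = exp x + δ * (exp (x + y) + exp (x - y)) := by
        rw [sub_eq_add_neg, exp_add, exp_add]; ring

lemma lintegral_sub_gaussianReal (g : ℝ → ENNReal) (m : ℝ) (v : NNReal) :
    ∫⁻ y, g (y - m) ∂gaussianReal m v = ∫⁻ e, g e ∂gaussianReal 0 v := by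
  rw [← sub_self m, ← gaussianReal_map_sub_const]
  exact (lintegral_map_equiv g (MeasurableEquiv.subRight m)).symm

lemma integral_exp_mul_gaussianReal_zero (v : NNReal) (t : ℝ) :
    ∫ e, exp (t * e) ∂gaussianReal 0 v = exp (v * t ^ 2 / 2) := by
  simpa [mgf] using congrFun (mgf_id_gaussianReal (μ := 0) (v := v)) t

lemma lintegral_exp_add_mul_abs_gaussianReal_le {δ : ℝ} (hδ₀ : 0 ≤ δ) (hδ₁ : δ ≤ 1)
    {t s b : ℝ} (hts : |t| + |s| ≤ b) (v : NNReal) :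
    ∫⁻ e, ENNReal.ofReal (exp (t * e + δ * |s * e|)) ∂gaussianReal 0 v ≤
      ENNReal.ofReal (exp (v * t ^ 2 / 2 + 2 * exp (v * b ^ 2 / 2) * δ)) := by
  set K := 2 * exp (v * b ^ 2 / 2) with hK
  have hexp (u : ℝ) : Integrable (fun e ↦ exp (u * e)) (gaussianReal 0 v) :=
    integrable_exp_mul_gaussianReal u
  have hpair : Integrable (fun e ↦ δ * (exp ((t + s) * e) + exp ((t - s) * e)))
      (gaussianReal 0 v) := ((hexp _).add (hexp _)).const_mul δ
  have hshift {u : ℝ} (hu : |u| ≤ |t| + |s|) : exp (v * u ^ 2 / 2) ≤ exp (v * b ^ 2 / 2) := by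
    have : u ^ 2 ≤ b ^ 2 := sq_le_sq.2 ((hu.trans hts).trans (le_abs_self b))
    gcongr
  calc ∫⁻ e, ENNReal.ofReal (exp (t * e + δ * |s * e|)) ∂gaussianReal 0 v
      ≤ ∫⁻ e, ENNReal.ofReal (exp (t * e) + δ * (exp ((t + s) * e) + exp ((t - s) * e)))
          ∂gaussianReal 0 v := by
        refine lintegral_mono fun e ↦ ENNReal.ofReal_le_ofReal ?_
        simpa only [add_mul, sub_mul] using exp_add_mul_abs_le hδ₀ hδ₁ (t * e) (s * e)
    _ = ENNReal.ofReal (exp (v * t ^ 2 / 2) +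
          δ * (exp (v * (t + s) ^ 2 / 2) + exp (v * (t - s) ^ 2 / 2))) := by
        rw [← ofReal_integral_eq_lintegral_ofReal ((hexp t).fun_add hpair)
            (ae_of_all _ fun e ↦ by positivity), integral_add (hexp t) hpair,
          integral_const_mul, integral_add (hexp _) (hexp _)]
        simp only [integral_exp_mul_gaussianReal_zero]
    _ ≤ ENNReal.ofReal (exp (v * t ^ 2 / 2) * exp (K * δ)) := by
        refine ENNReal.ofReal_le_ofReal ?_
        have hsum : δ * (exp (v * (t + s) ^ 2 / 2) + exp (v * (t - s) ^ 2 / 2)) ≤ K * δ := by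
          rw [mul_comm, hK, two_mul]
          exact mul_le_mul_of_nonneg_right
            (add_le_add (hshift (abs_add_le t s)) (hshift (abs_sub t s))) hδ₀
        have hone : 1 ≤ exp (v * t ^ 2 / 2) := one_le_exp (by positivity)
        have hKδ : 0 ≤ K * δ := by positivity
        nlinarith [add_one_le_exp (K * δ)]
    _ = ENNReal.ofReal (exp (v * t ^ 2 / 2 + K * δ)) := by rw [exp_add]

end Gaussian

section ExcessEnvelope

open ProbabilityTheory

/-- The excess squared loss `e ^ 2 - (e - g) ^ 2` at noise `e` of a predictor whose error is `g`,
bounded uniformly over the `δ`-perturbations `g = h + r`, `|r| ≤ δ`, of the error `h`. The term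
`- h ^ 2 / 2` replaces `- (h + r) ^ 2`, so that the envelope is quadratic in `h`. -/
def excessEnvelope (δ h e : ℝ) : ℝ := 2 * e * h + 2 * δ * |e| + δ ^ 2 - h ^ 2 / 2

lemma sq_sub_sq_sub_le_excessEnvelope {δ r : ℝ} (hr : |r| ≤ δ) (h e : ℝ) :
    e ^ 2 - (e - (h + r)) ^ 2 ≤ excessEnvelope δ h e := by
  have hnoise : e * r ≤ δ * |e| := by
    rw [mul_comm δ]
    exact (le_abs_self _).trans ((abs_mul e r).trans_le (by gcongr))
  have hsq : r ^ 2 ≤ δ ^ 2 := sq_le_sq' (abs_le.1 hr).1 (abs_le.1 hr).2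
  unfold excessEnvelope
  nlinarith [sq_nonneg (h + 2 * r)]

/-- The residual sum of squares of the predictor `g`, which least squares minimises over `g`. -/
def empiricalRisk {𝒳 : Type*} {n : ℕ} (data : Fin n → 𝒳 × ℝ) (g : 𝒳 → ℝ) : ℝ :=
  ∑ i, ((data i).2 - g (data i).1) ^ 2

lemma sum_excessEnvelope_nonneg {𝒳 : Type*} {n : ℕ} {data : Fin n → 𝒳 × ℝ} {f h r : 𝒳 → ℝ} {δ : ℝ}
    (hr : ∀ i, |r (data i).1| ≤ δ)
    (hrisk : empiricalRisk data (f + (h + r)) ≤ empiricalRisk data f) :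
    0 ≤ ∑ i, excessEnvelope δ (h (data i).1) ((data i).2 - f (data i).1) := by
  calc 0 ≤ empiricalRisk data f - empiricalRisk data (f + (h + r)) := sub_nonneg.2 hrisk
    _ = ∑ i, (((data i).2 - f (data i).1) ^ 2 -
          ((data i).2 - f (data i).1 - (h (data i).1 + r (data i).1)) ^ 2) := by
        simp only [empiricalRisk, ← sum_sub_distrib, Pi.add_apply, sub_sub]
    _ ≤ _ := sum_le_sum fun i _ ↦ sq_sub_sq_sub_le_excessEnvelope (hr i) _ _

lemma lintegral_exp_excessEnvelope_le {v : NNReal} {l : ℝ} (hl : 0 ≤ l)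
    (hlv : 8 * l * v ≤ 1) {δ : ℝ} (hδ₀ : 0 ≤ δ) (hδ₁ : δ ≤ 1) {h H : ℝ} (hh : |h| ≤ H) (m : ℝ) :
    ∫⁻ y, ENNReal.ofReal (exp (l * excessEnvelope δ h (y - m))) ∂gaussianReal m v ≤
      ENNReal.ofReal
        (exp ((l + 2 * exp (v * (2 * l * (H + 1)) ^ 2 / 2)) * δ - l / 4 * h ^ 2)) := by
  set K := 2 * exp (v * (2 * l * (H + 1)) ^ 2 / 2)
  have hsplit (e : ℝ) : exp (l * excessEnvelope δ h e) =
      exp (l * (δ ^ 2 - h ^ 2 / 2)) * exp (2 * l * h * e + δ * |2 * l * e|) := by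
    rw [← exp_add, abs_mul, abs_of_nonneg (by positivity : 0 ≤ 2 * l), excessEnvelope]
    ring_nf
  have hb : |2 * l * h| + |2 * l| ≤ 2 * l * (H + 1) := by
    rw [abs_mul, abs_of_nonneg (by positivity : 0 ≤ 2 * l), mul_add, mul_one]
    gcongr
  calc ∫⁻ y, ENNReal.ofReal (exp (l * excessEnvelope δ h (y - m))) ∂gaussianReal m v
      = ENNReal.ofReal (exp (l * (δ ^ 2 - h ^ 2 / 2))) *
          ∫⁻ e, ENNReal.ofReal (exp (2 * l * h * e + δ * |2 * l * e|)) ∂gaussianReal 0 v := by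
        rw [lintegral_sub_gaussianReal (fun e ↦ ENNReal.ofReal (exp (l * excessEnvelope δ h e))),
          ← lintegral_const_mul' _ _ ENNReal.ofReal_ne_top]
        simp only [hsplit, ENNReal.ofReal_mul (exp_nonneg _)]
    _ ≤ ENNReal.ofReal (exp (l * (δ ^ 2 - h ^ 2 / 2))) *
          ENNReal.ofReal (exp (v * (2 * l * h) ^ 2 / 2 + K * δ)) := by
        gcongr
        exact lintegral_exp_add_mul_abs_gaussianReal_le hδ₀ hδ₁ hb v
    _ ≤ ENNReal.ofReal (exp ((l + K) * δ - l / 4 * h ^ 2)) := by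
        rw [← ENNReal.ofReal_mul (exp_nonneg _), ← exp_add]
        refine ENNReal.ofReal_le_ofReal (exp_le_exp.2 ?_)
        have hδ : l * δ ^ 2 ≤ l * δ := by gcongr; nlinarith
        -- The noise costs at most half of the drift `- l * h ^ 2 / 2`.
        have hvar : v * (2 * l * h) ^ 2 / 2 ≤ l / 4 * h ^ 2 := by
          have := mul_le_mul_of_nonneg_right hlv (by positivity : 0 ≤ l * h ^ 2 / 4)
          linarith
        linarith

end ExcessEnvelope

section Chernoff

lemma lintegral_exp_neg_le {α : Type*} [MeasurableSpace α] (μ : Measure α)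
    [IsProbabilityMeasure μ] {u : α → ℝ} {U : ℝ} (hu₀ : ∀ x, 0 ≤ u x) (huU : ∀ x, u x ≤ U)
    (hu : Integrable u μ) :
    ∫⁻ x, ENNReal.ofReal (exp (-u x)) ∂μ ≤ ENNReal.ofReal (exp (-((∫ x, u x ∂μ) / (1 + U)))) := by
  have hpointwise (x : α) : exp (-u x) ≤ 1 - u x / (1 + U) := by
    have hx := hu₀ x
    calc exp (-u x) ≤ (1 + u x)⁻¹ := by
          rw [exp_neg, add_comm]; gcongr; exact add_one_le_exp _
      _ = 1 - u x / (1 + u x) := by field_simp; ring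
      _ ≤ 1 - u x / (1 + U) := by gcongr; exact huU x
  have hint : Integrable (fun x ↦ 1 - u x / (1 + U)) μ :=
    (integrable_const 1).sub (hu.div_const _)
  calc ∫⁻ x, ENNReal.ofReal (exp (-u x)) ∂μ
      ≤ ∫⁻ x, ENNReal.ofReal (1 - u x / (1 + U)) ∂μ :=
        lintegral_mono fun x ↦ ENNReal.ofReal_le_ofReal (hpointwise x)
    _ = ENNReal.ofReal (1 - (∫ x, u x ∂μ) / (1 + U)) := by
        rw [← ofReal_integral_eq_lintegral_ofReal hint
            (ae_of_all _ fun x ↦ (exp_nonneg _).trans (hpointwise x)),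
          integral_sub (integrable_const 1) (hu.div_const _), integral_div]
        simp
    _ ≤ _ := ENNReal.ofReal_le_ofReal (one_sub_le_exp_neg _)

lemma lintegral_pi_prod_le {α : Type*} [MeasurableSpace α] (ρ : Measure α) [SigmaFinite ρ]
    {g : α → ENNReal} (hg : ∀ z, g z ≠ ⊤) (n : ℕ) :
    ∫⁻ z : Fin n → α, ∏ i, g (z i) ∂(Measure.pi fun _ ↦ ρ) ≤ (∫⁻ z, g z ∂ρ) ^ n := by
  induction n with
  | zero => simp
  | succ n ih =>
    have hsplit := measurePreserving_piFinSuccAbove (fun _ : Fin (n + 1) ↦ ρ) 0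
    calc ∫⁻ z : Fin (n + 1) → α, ∏ i, g (z i) ∂(Measure.pi fun _ ↦ ρ)
        = ∫⁻ w : α × (Fin n → α), g w.1 * ∏ i, g (w.2 i) ∂(ρ.prod (Measure.pi fun _ ↦ ρ)) := by
          rw [← hsplit.lintegral_comp_emb (MeasurableEquiv.measurableEmbedding _)]
          simp [Fin.prod_univ_succ, MeasurableEquiv.piFinSuccAbove, Fin.tail]
      _ ≤ ∫⁻ x, ∫⁻ y : Fin n → α, g x * ∏ i, g (y i) ∂(Measure.pi fun _ ↦ ρ) ∂ρ :=
          lintegral_prod_le _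
      _ ≤ ∫⁻ x, (∫⁻ z, g z ∂ρ) ^ n * g x ∂ρ := by
          gcongr with x
          rw [lintegral_const_mul' _ _ (hg x), mul_comm]
          gcongr
      _ ≤ (∫⁻ z, g z ∂ρ) ^ (n + 1) := by
          by_cases htop : ∫⁻ z, g z ∂ρ = ⊤
          · simp [htop]
          · rw [lintegral_const_mul' _ _ (ENNReal.pow_ne_top htop), pow_succ]

lemma measure_pi_le_lintegral_exp_pow {α : Type*} [MeasurableSpace α] (ρ : Measure α)
    [SigmaFinite ρ] (g : α → ℝ) {n : ℕ} {A : Set (Fin n → α)} (hA : MeasurableSet A)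
    (hg : ∀ᵐ z ∂(Measure.pi fun _ ↦ ρ), z ∈ A → 0 ≤ ∑ i, g (z i)) :
    (Measure.pi fun _ ↦ ρ) A ≤ (∫⁻ z, ENNReal.ofReal (exp (g z)) ∂ρ) ^ n := by
  refine le_trans ?_ (lintegral_pi_prod_le ρ (fun _ ↦ ENNReal.ofReal_ne_top) n)
  rw [← lintegral_indicator_one hA]
  refine lintegral_mono_ae ?_
  filter_upwards [hg] with z hz
  by_cases hzA : z ∈ A
  · rw [Set.indicator_of_mem hzA, ← ENNReal.ofReal_prod_of_nonneg fun i _ ↦ exp_nonneg _,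
      ← exp_sum, Pi.one_apply, ENNReal.one_le_ofReal]
    exact one_le_exp (hz hzA)
  · simp [hzA]

end Chernoff

section Regression

variable {d : ℕ} (μ : Measure (Euc d)) (f : Euc d → ℝ) (v : NNReal)

-- Equality can fail: the kernel defining `jointLaw` is measurable only if `f` is.
lemma lintegral_jointLaw_le (g : Euc d × ℝ → ENNReal) :
    ∫⁻ z, g z ∂jointLaw μ f v ≤
      ∫⁻ x, ∫⁻ y, g (x, y) ∂ProbabilityTheory.gaussianReal (f x) v ∂μ :=
  (Measure.lintegral_bind_le _ _ _).trans (lintegral_mono fun _ ↦ lintegral_map_le _ _)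

instance [IsFiniteMeasure μ] : IsFiniteMeasure (jointLaw μ f v) where
  measure_univ_lt_top := by
    rw [← lintegral_one]
    exact (lintegral_jointLaw_le μ f v _).trans_lt (by simp)

lemma ae_fst_jointLaw {p : Euc d → Prop} (hp : ∀ᵐ x ∂μ, p x) :
    ∀ᵐ z ∂jointLaw μ f v, p z.1 := by
  set N := toMeasurable μ {x | ¬p x}
  have hN : MeasurableSet N := measurableSet_toMeasurable _ _
  have hzero : jointLaw μ f v (Prod.fst ⁻¹' N) = 0 := by
    rw [← lintegral_indicator_one (measurable_fst hN), ← nonpos_iff_eq_zero]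
    calc ∫⁻ z, (Prod.fst ⁻¹' N).indicator 1 z ∂jointLaw μ f v
        ≤ ∫⁻ x, ∫⁻ _, N.indicator 1 x ∂ProbabilityTheory.gaussianReal (f x) v ∂μ :=
          lintegral_jointLaw_le μ f v _
      _ = 0 := by simp [lintegral_indicator_one hN, N, measure_toMeasurable, ae_iff.1 hp]
  exact measure_mono_null (fun z hz ↦ subset_toMeasurable μ _ hz) hzero

lemma ae_pi_jointLaw [IsFiniteMeasure μ] {p : Euc d → Prop} (hp : ∀ᵐ x ∂μ, p x) (n : ℕ) :
    ∀ᵐ data ∂(Measure.pi fun _ : Fin n ↦ jointLaw μ f v), ∀ i, p (data i).1 :=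
  ae_all_iff.2 fun i ↦
    (Measure.tendsto_eval_ae_ae (μ := fun _ ↦ jointLaw μ f v) (i := i)).eventually
      (ae_fst_jointLaw μ f v hp)

variable [IsProbabilityMeasure μ]

lemma lintegral_exp_excessEnvelope_jointLaw_le {l : ℝ} (hl : 0 ≤ l) (hlv : 8 * l * v ≤ 1)
    {δ : ℝ} (hδ₀ : 0 ≤ δ) (hδ₁ : δ ≤ 1) {h : Euc d → ℝ} {H : ℝ} (hh : ∀ x, |h x| ≤ H)
    (hint : Integrable (fun x ↦ h x ^ 2) μ) :
    ∫⁻ z, ENNReal.ofReal (exp (l * excessEnvelope δ (h z.1) (z.2 - f z.1))) ∂jointLaw μ f v ≤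
      ENNReal.ofReal (exp ((l + 2 * exp (v * (2 * l * (H + 1)) ^ 2 / 2)) * δ -
        l / 4 / (1 + l / 4 * H ^ 2) * ∫ x, h x ^ 2 ∂μ)) := by
  set K := l + 2 * exp (v * (2 * l * (H + 1)) ^ 2 / 2)
  have hsq (x : Euc d) : l / 4 * h x ^ 2 ≤ l / 4 * H ^ 2 := by
    have := sq_le_sq.2 ((hh x).trans (le_abs_self H))
    gcongr
  calc ∫⁻ z, ENNReal.ofReal (exp (l * excessEnvelope δ (h z.1) (z.2 - f z.1))) ∂jointLaw μ f v
      ≤ ∫⁻ x, ENNReal.ofReal (exp (K * δ - l / 4 * h x ^ 2)) ∂μ :=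
        (lintegral_jointLaw_le μ f v _).trans <| lintegral_mono fun x ↦
          lintegral_exp_excessEnvelope_le hl hlv hδ₀ hδ₁ (hh x) (f x)
    _ = ENNReal.ofReal (exp (K * δ)) * ∫⁻ x, ENNReal.ofReal (exp (-(l / 4 * h x ^ 2))) ∂μ := by
        rw [← lintegral_const_mul' _ _ ENNReal.ofReal_ne_top]
        simp only [sub_eq_add_neg, exp_add, ENNReal.ofReal_mul (exp_nonneg _)]
    _ ≤ ENNReal.ofReal (exp (K * δ)) *
          ENNReal.ofReal (exp (-((∫ x, l / 4 * h x ^ 2 ∂μ) / (1 + l / 4 * H ^ 2)))) := by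
        gcongr
        exact lintegral_exp_neg_le μ (fun x ↦ by positivity) hsq (hint.const_mul _)
    _ = _ := by
        rw [← ENNReal.ofReal_mul (exp_nonneg _), ← exp_add, integral_const_mul]
        ring_nf

lemma exists_measure_le_exp_of_empiricalRisk_le (H : ℝ) :
    ∃ K c : ℝ, 0 < c ∧ ∀ {n : ℕ}, n ≠ 0 → ∀ {h : Euc d → ℝ}, (∀ x, |h x| ≤ H) →
      Integrable (fun x ↦ h x ^ 2) μ → ∀ {A : Set (Fin n → Euc d × ℝ)}, MeasurableSet A →
      (∀ᵐ data ∂(Measure.pi fun _ ↦ jointLaw μ f v), data ∈ A →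
        ∃ r : Euc d → ℝ, (∀ i, |r (data i).1| ≤ 1 / n) ∧
          empiricalRisk data (f + (h + r)) ≤ empiricalRisk data f) →
      (Measure.pi fun _ ↦ jointLaw μ f v) A ≤
        ENNReal.ofReal (exp (K - c * (n * ∫ x, h x ^ 2 ∂μ))) := by
  obtain ⟨l, hl₀, hlv⟩ : ∃ l : ℝ, 0 < l ∧ 8 * l * v ≤ 1 := by
    refine ⟨1 / (8 * (v + 1)), by positivity, ?_⟩
    rw [mul_one_div, div_mul_eq_mul_div, div_le_one (by positivity)]
    linarith
  set K := l + 2 * exp (v * (2 * l * (H + 1)) ^ 2 / 2)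
  set c := l / 4 / (1 + l / 4 * H ^ 2)
  refine ⟨K, c, by positivity, fun {n} hn {h} hh hint {A} hA hfit ↦ ?_⟩
  have hnonneg : ∀ᵐ data ∂(Measure.pi fun _ ↦ jointLaw μ f v), data ∈ A →
      0 ≤ ∑ i, l * excessEnvelope (1 / n) (h (data i).1) ((data i).2 - f (data i).1) := by
    filter_upwards [hfit] with data hdata hmem
    obtain ⟨r, hr, hle⟩ := hdata hmem
    rw [← mul_sum]
    exact mul_nonneg hl₀.le (sum_excessEnvelope_nonneg hr hle)
  have hδ₁ : 1 / (n : ℝ) ≤ 1 := by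
    rw [one_div]; exact Nat.cast_inv_le_one n
  calc (Measure.pi fun _ ↦ jointLaw μ f v) A
      ≤ (∫⁻ z, ENNReal.ofReal (exp (l * excessEnvelope (1 / n) (h z.1) (z.2 - f z.1)))
          ∂jointLaw μ f v) ^ n :=
        measure_pi_le_lintegral_exp_pow (jointLaw μ f v)
          (fun z ↦ l * excessEnvelope (1 / n) (h z.1) (z.2 - f z.1)) hA hnonneg
    _ ≤ ENNReal.ofReal (exp (K * (1 / n) - c * ∫ x, h x ^ 2 ∂μ)) ^ n := by
        gcongr
        exact lintegral_exp_excessEnvelope_jointLaw_le μ f v hl₀.le hlv (by positivity) hδ₁ hh hint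
    _ = ENNReal.ofReal (exp (K - c * (n * ∫ x, h x ^ 2 ∂μ))) := by
        rw [← ENNReal.ofReal_pow (exp_nonneg _), ← exp_nat_mul]
        congr 2
        field_simp

end Regression

section EmpiricalRisk

/-- A finite `δ`-cover, uniform over the points of `S`, of the parameters in `T` of a family of
functions `F`. It consists of measurable cells of parameters rather than of centres, so that each
cell pulls back to an event along a measurable estimator. -/
structure IsUniformCover {P 𝒳 : Type*} [MeasurableSpace P] (F : P → 𝒳 → ℝ) (T : Set P)
    (S : Set 𝒳) (δ : ℝ) (𝒞 : Finset (Set P)) : Prop where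
  measurableSet : ∀ B ∈ 𝒞, MeasurableSet B
  subset_sUnion : T ⊆ ⋃₀ 𝒞
  abs_sub_le : ∀ B ∈ 𝒞, ∀ p ∈ B, ∀ p' ∈ B, ∀ x ∈ S, |F p x - F p' x| ≤ δ

/-- The uniform covering numbers of the family `F` at scale `1 / n` grow at most polynomially in
`n`, as they do for a class with finitely many parameters. -/
def HasPolynomialCover {P 𝒳 : Type*} [MeasurableSpace P] (F : P → 𝒳 → ℝ) (T : Set P)
    (S : Set 𝒳) : Prop :=
  ∃ A a : ℕ, ∀ n : ℕ, n ≠ 0 → ∃ 𝒞 : Finset (Set P), #𝒞 ≤ A * n ^ a ∧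
    IsUniformCover F T S (1 / n) 𝒞

lemma exists_mul_pow_mul_exp_le (A K : ℝ) (a : ℕ) {ε : ℝ} (hε : 0 < ε) :
    ∃ w > 0, ∀ n : ℕ, 2 ≤ n → A * n ^ a * exp (K - w * log n) ≤ ε := by
  obtain ⟨j, hj⟩ := exists_pow_lt_of_lt_one (div_pos hε (by positivity : 0 < |A| * exp K + 1))
    (by norm_num : (2⁻¹ : ℝ) < 1)
  rw [lt_div_iff₀ (by positivity)] at hj
  refine ⟨a + j + 1, by positivity, fun n hn ↦ ?_⟩
  have hn₀ : (0 : ℝ) < n := by positivity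
  have hn₂ : (n : ℝ)⁻¹ ^ j ≤ 2⁻¹ ^ j := by gcongr; exact_mod_cast hn
  calc A * n ^ a * exp (K - (a + j + 1) * log n)
      = A * exp K * (n : ℝ)⁻¹ ^ (j + 1) := by
        have : exp (((a + (j + 1) : ℕ) : ℝ) * log n) = n ^ (a + (j + 1)) := by
          rw [exp_nat_mul, exp_log hn₀]
        push_cast at this
        rw [exp_sub, add_assoc, this, pow_add, inv_pow]
        field_simp
    _ ≤ |A| * exp K * 2⁻¹ ^ j := by
        gcongr
        · exact le_abs_self A
        · refine le_trans (pow_le_pow_of_le_one (by positivity) ?_ j.le_succ) hn₂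
          exact Nat.cast_inv_le_one n
    _ ≤ ε := by
        have : (0 : ℝ) < 2⁻¹ ^ j := by positivity
        linarith

variable {d : ℕ} (μ : Measure (Euc d)) [IsProbabilityMeasure μ] (f : Euc d → ℝ) (v : NNReal)
  {P : Type*} [MeasurableSpace P] {F : P → Euc d → ℝ} {T : Set P} {S : Set (Euc d)}

lemma exists_measure_lt_integral_le_of_isUniformCover {H : ℝ}
    (hFH : ∀ p ∈ T, ∀ x, |F p x - f x| ≤ H) (hS : ∀ᵐ x ∂μ, x ∈ S) :
    ∃ K c : ℝ, 0 < c ∧ ∀ {n : ℕ} {𝒞 : Finset (Set P)}, n ≠ 0 →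
      IsUniformCover F T S (1 / n) 𝒞 → ∀ {G : (Fin n → Euc d × ℝ) → P}, Measurable G →
      (∀ data, G data ∈ T) →
      (∀ data, empiricalRisk data (F (G data)) ≤ empiricalRisk data f) →
      ∀ {t : ℝ}, 0 ≤ t →
      (Measure.pi fun _ ↦ jointLaw μ f v) {data | t < ∫ x, (F (G data) x - f x) ^ 2 ∂μ} ≤
        ENNReal.ofReal (#𝒞 * exp (K - c * (n * t))) := by
  obtain ⟨K, c, hc, hcell⟩ := exists_measure_le_exp_of_empiricalRisk_le μ f v H
  refine ⟨K, c, hc, fun {n 𝒞} hn h𝒞 {G} hG hGT hfit {t} ht ↦ ?_⟩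
  set bad := {data | t < ∫ x, (F (G data) x - f x) ^ 2 ∂μ}
  have hbad : bad ⊆ ⋃ B ∈ 𝒞, bad ∩ G ⁻¹' B := fun data hdata ↦ by
    obtain ⟨B, hB, hmem⟩ := h𝒞.subset_sUnion (hGT data)
    exact Set.mem_iUnion₂.2 ⟨B, hB, hdata, hmem⟩
  have hbound : ∀ B ∈ 𝒞, (Measure.pi fun _ ↦ jointLaw μ f v) (bad ∩ G ⁻¹' B) ≤
      ENNReal.ofReal (exp (K - c * (n * t))) := by
    intro B hB
    obtain hempty | ⟨data₀, hdata₀, hmem₀⟩ := (bad ∩ G ⁻¹' B).eq_empty_or_nonempty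
    · simp [hempty]
    have hint : Integrable (fun x ↦ (F (G data₀) x - f x) ^ 2) μ :=
      .of_integral_ne_zero (ht.trans_lt hdata₀).ne'
    calc (Measure.pi fun _ ↦ jointLaw μ f v) (bad ∩ G ⁻¹' B)
        ≤ (Measure.pi fun _ ↦ jointLaw μ f v) (G ⁻¹' B) := measure_mono Set.inter_subset_right
      _ ≤ ENNReal.ofReal (exp (K - c * (n * ∫ x, (F (G data₀) x - f x) ^ 2 ∂μ))) := by
          refine hcell hn (hFH _ (hGT data₀)) hint (hG (h𝒞.measurableSet B hB)) ?_
          filter_upwards [ae_pi_jointLaw μ f v hS n] with data hdata hmem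
          refine ⟨F (G data) - F (G data₀),
            fun i ↦ h𝒞.abs_sub_le B hB _ hmem _ hmem₀ _ (hdata i), ?_⟩
          convert hfit data using 2
          exact add_eq_of_eq_sub' (sub_add_sub_cancel' _ _ _)
      _ ≤ ENNReal.ofReal (exp (K - c * (n * t))) := by
          gcongr
          exact hdata₀.le
  calc (Measure.pi fun _ ↦ jointLaw μ f v) bad
      ≤ ∑ B ∈ 𝒞, (Measure.pi fun _ ↦ jointLaw μ f v) (bad ∩ G ⁻¹' B) :=
        (measure_mono hbad).trans (measure_biUnion_finset_le _ _)
    _ ≤ #𝒞 • ENNReal.ofReal (exp (K - c * (n * t))) := sum_le_card_nsmul _ _ _ hbound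
    _ = ENNReal.ofReal (#𝒞 * exp (K - c * (n * t))) := by
        rw [nsmul_eq_mul, ENNReal.ofReal_mul (by positivity), ENNReal.ofReal_natCast]

theorem exists_rate_of_hasPolynomialCover {H : ℝ}
    (hFH : ∀ p ∈ T, ∀ x, |F p x - f x| ≤ H) (hS : ∀ᵐ x ∂μ, x ∈ S)
    (hF : HasPolynomialCover F T S) {ε : ℝ} (hε : 0 < ε) :
    ∃ C : ℝ, 0 < C ∧ ∀ n : ℕ, 2 ≤ n → ∀ G : (Fin n → Euc d × ℝ) → P, Measurable G →
      (∀ data, G data ∈ T) →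
      (∀ data, empiricalRisk data (F (G data)) ≤ empiricalRisk data f) →
      (Measure.pi fun _ ↦ jointLaw μ f v)
          {data | C * √(log n / n) < √(∫ x, (F (G data) x - f x) ^ 2 ∂μ)} ≤
        ENNReal.ofReal ε := by
  obtain ⟨A, a, hcover⟩ := hF
  obtain ⟨K, c, hc, htail⟩ := exists_measure_lt_integral_le_of_isUniformCover μ f v hFH hS
  obtain ⟨w, hw, hε⟩ := exists_mul_pow_mul_exp_le A K a hε
  refine ⟨√(w / c), by positivity, fun n hn G hG hGT hfit ↦ ?_⟩
  have hn₀ : n ≠ 0 := by omega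
  obtain ⟨𝒞, hcard, h𝒞⟩ := hcover n hn₀
  have ht : 0 ≤ w / c * (log n / n) := by positivity
  have hrate : c * (n * (w / c * (log n / n))) = w * log n := by field_simp
  simp only [← sqrt_mul (div_pos hw hc).le, sqrt_lt_sqrt_iff ht]
  refine (htail hn₀ h𝒞 hG hGT hfit ht).trans (ENNReal.ofReal_le_ofReal ?_)
  rw [hrate]
  refine le_trans ?_ (hε n hn)
  gcongr
  exact_mod_cast hcard

end EmpiricalRisk

section PolynomialCover

variable {𝒳 : Type*} {S : Set 𝒳}

lemma hasPolynomialCover_of_lipschitzWith {E : Type*} [NormedAddCommGroup E] [NormedSpace ℝ E]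
    [FiniteDimensional ℝ E] [MeasurableSpace E] [BorelSpace E] {F : E → 𝒳 → ℝ} {L : NNReal}
    (hF : ∀ x ∈ S, LipschitzWith L fun p ↦ F p x) {T : Set E} (hT : Bornology.IsBounded T) :
    HasPolynomialCover F T S := by
  obtain ⟨A, a, hcover⟩ := exists_card_isCover_le_of_isBounded hT
  obtain ⟨J, hJ⟩ := exists_nat_gt (2 * L)
  have hJ₀ : J ≠ 0 := by rintro rfl; simp at hJ
  refine ⟨A * J ^ a, a, fun n hn ↦ ?_⟩
  obtain ⟨C, hcard, hC⟩ := hcover (n * J) (mul_ne_zero hn hJ₀)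
  set δ : NNReal := ((n * J : ℕ) : NNReal)⁻¹ with hδ
  refine ⟨C.image fun s ↦ Metric.closedBall s δ, ?_, ?_, ?_, ?_⟩
  · calc #(C.image fun s ↦ Metric.closedBall s δ) ≤ A * (n * J) ^ a := card_image_le.trans hcard
      _ = A * J ^ a * n ^ a := by ring
  · simpa using fun s _ ↦ Metric.isClosed_closedBall.measurableSet
  · simpa [Set.sUnion_image] using Metric.isCover_iff_subset_iUnion_closedBall.1 hC
  · simp only [mem_image, forall_exists_index, and_imp, forall_apply_eq_imp_iff₂]
    intro s _ p hp p' hp' x hx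
    have hdist : dist p p' ≤ 2 * δ := by
      rw [two_mul]
      exact (dist_triangle_right p p' s).trans (add_le_add hp hp')
    calc |F p x - F p' x| ≤ L * dist p p' := (hF x hx).dist_le_mul p p'
      _ ≤ L * (2 * δ) := by gcongr
      _ = 2 * L * δ := by ring
      _ ≤ J * δ := by gcongr; exact_mod_cast hJ.le
      _ = 1 / n := by
          have : (J : ℝ) ≠ 0 := Nat.cast_ne_zero.2 hJ₀
          rw [hδ]
          push_cast
          field_simp

lemma measurableSet_sigmaMk_image {ι : Type*} {P : ι → Type*} [∀ i, MeasurableSpace (P i)] {i : ι}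
    {B : Set (P i)} (hB : MeasurableSet B) : MeasurableSet (Sigma.mk i '' B) := by
  refine MeasurableSpace.measurableSet_iInf.2 fun j ↦ ?_
  change MeasurableSet (Sigma.mk j ⁻¹' (Sigma.mk i '' B))
  obtain rfl | hij := eq_or_ne i j
  · rwa [Set.preimage_image_eq _ sigma_mk_injective]
  · rw [Set.preimage_image_sigmaMk_of_ne hij.symm]
    exact MeasurableSet.empty

lemma hasPolynomialCover_sigma {ι : Type*} [Finite ι] {P : ι → Type*}
    [∀ i, MeasurableSpace (P i)] {F : (Σ i, P i) → 𝒳 → ℝ} {T : Set (Σ i, P i)}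
    (hF : ∀ i, HasPolynomialCover (fun p ↦ F ⟨i, p⟩) (Sigma.mk i ⁻¹' T) S) :
    HasPolynomialCover F T S := by
  cases nonempty_fintype ι
  choose A a hcover using hF
  refine ⟨∑ i, A i, ∑ i, a i, fun n hn ↦ ?_⟩
  choose 𝒞 hcard h𝒞 using fun i ↦ hcover i n hn
  refine ⟨univ.biUnion fun i ↦ (𝒞 i).image (Sigma.mk i '' ·), ?_, ?_, ?_, ?_⟩
  · calc #(univ.biUnion fun i ↦ (𝒞 i).image (Sigma.mk i '' ·)) ≤ ∑ i, #(𝒞 i) :=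
          card_biUnion_le.trans (sum_le_sum fun i _ ↦ card_image_le)
      _ ≤ ∑ i, A i * n ^ ∑ j, a j := by
          refine sum_le_sum fun i _ ↦ (hcard i).trans ?_
          gcongr
          · omega
          · exact single_le_sum (f := a) (fun _ _ ↦ Nat.zero_le _) (mem_univ i)
      _ = (∑ i, A i) * n ^ ∑ j, a j := (sum_mul ..).symm
  · simp only [mem_biUnion, mem_univ, true_and, mem_image, forall_exists_index, and_imp]
    rintro _ i B hB rfl
    exact measurableSet_sigmaMk_image ((h𝒞 i).measurableSet B hB)
  · rintro ⟨i, p⟩ hp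
    obtain ⟨B, hB, hpB⟩ := (h𝒞 i).subset_sUnion hp
    refine ⟨Sigma.mk i '' B, ?_, Set.mem_image_of_mem _ hpB⟩
    exact mem_coe.2 (mem_biUnion.2 ⟨i, mem_univ i, mem_image_of_mem _ hB⟩)
  · simp only [mem_biUnion, mem_univ, true_and, mem_image, forall_exists_index, and_imp]
    rintro _ i B hB rfl _ ⟨p, hp, rfl⟩ _ ⟨p', hp', rfl⟩
    exact (h𝒞 i).abs_sub_le B hB p hp p' hp'

end PolynomialCover

section Softmax

variable {ι : Type*} [Fintype ι]

/-- The softmax of a vector of scores: the probability weights on `ι` proportional to `exp (a i)`.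
The gating weights of `moe` at `x` are the softmax of the scores `⟪ω i, x⟫ + β i`. -/
def softmax (a : ι → ℝ) (i : ι) : ℝ := exp (a i) / ∑ j, exp (a j)

lemma softmax_nonneg (a : ι → ℝ) (i : ι) : 0 ≤ softmax a i := by
  unfold softmax; positivity

lemma sum_softmax_le_one (a : ι → ℝ) : ∑ i, softmax a i ≤ 1 := by
  simp only [softmax, ← sum_div]
  exact div_self_le_one _

lemma softmax_sub_softmax_le (a b : ι → ℝ) (i : ι) :
    softmax a i - softmax b i ≤ 2 * dist a b * softmax a i := by
  set t := dist a b
  have hshift {c c' : ℝ} (h : dist c c' ≤ t) : exp c ≤ exp t * exp c' := by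
    rw [← exp_add]
    gcongr
    linarith [(le_abs_self (c - c')).trans h]
  have hcoord (j : ι) : dist (a j) (b j) ≤ t := dist_le_pi_dist a b j
  have hratio : exp (-(2 * t)) * softmax a i ≤ softmax b i := by
    have hpos : 0 < ∑ j, exp (a j) := sum_pos (fun _ _ ↦ exp_pos _) ⟨i, mem_univ i⟩
    have hpos' : 0 < ∑ j, exp (b j) := sum_pos (fun _ _ ↦ exp_pos _) ⟨i, mem_univ i⟩
    have hden : ∑ j, exp (b j) ≤ exp t * ∑ j, exp (a j) := by
      rw [mul_sum]
      exact sum_le_sum fun j _ ↦ hshift (dist_comm (a j) (b j) ▸ hcoord j)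
    rw [softmax, softmax, ← mul_div_assoc, div_le_div_iff₀ hpos hpos']
    calc exp (-(2 * t)) * exp (a i) * ∑ j, exp (b j)
        ≤ exp (-(2 * t)) * (exp t * exp (b i)) * (exp t * ∑ j, exp (a j)) := by
          gcongr
          exact hshift (hcoord i)
      _ = exp (-(2 * t) + t + t) * (exp (b i) * ∑ j, exp (a j)) := by
          rw [exp_add, exp_add]; ring
      _ = exp (b i) * ∑ j, exp (a j) := by ring_nf; simp
  have := mul_le_mul_of_nonneg_right (one_sub_le_exp_neg (2 * t)) (softmax_nonneg a i)
  linarith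

lemma sum_abs_softmax_sub_softmax_le (a b : ι → ℝ) :
    ∑ i, |softmax a i - softmax b i| ≤ 4 * dist a b := by
  have hterm (i : ι) :
      |softmax a i - softmax b i| ≤ 2 * dist a b * (softmax a i + softmax b i) := by
    have ha := softmax_sub_softmax_le a b i
    have hb := softmax_sub_softmax_le b a i
    have ha' : 0 ≤ 2 * dist a b * softmax a i := mul_nonneg (by positivity) (softmax_nonneg a i)
    have hb' : 0 ≤ 2 * dist a b * softmax b i := mul_nonneg (by positivity) (softmax_nonneg b i)
    rw [dist_comm] at hb
    rw [abs_sub_le_iff]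
    constructor <;> linarith
  calc ∑ i, |softmax a i - softmax b i|
      ≤ 2 * dist a b * (∑ i, softmax a i + ∑ i, softmax b i) := by
        rw [← sum_add_distrib, mul_sum]
        exact sum_le_sum fun i _ ↦ hterm i
    _ ≤ 2 * dist a b * (1 + 1) := by
        gcongr <;> exact sum_softmax_le_one _
    _ = 4 * dist a b := by ring

lemma abs_sum_mul_sub_sum_mul_le {a b s t : ι → ℝ} {M D : ℝ} (hb₀ : ∀ i, 0 ≤ b i)
    (hb₁ : ∑ i, b i ≤ 1) (hD : 0 ≤ D) (hs : ∀ i, |s i| ≤ M) (hst : ∀ i, |s i - t i| ≤ D) :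
    |∑ i, a i * s i - ∑ i, b i * t i| ≤ (∑ i, |a i - b i|) * M + D := by
  calc |∑ i, a i * s i - ∑ i, b i * t i|
      = |∑ i, ((a i - b i) * s i + b i * (s i - t i))| := by
        rw [← sum_sub_distrib]
        congr! 2
        ring
    _ ≤ ∑ i, (|a i - b i| * M + b i * D) := by
        refine (abs_sum_le_sum_abs _ _).trans (sum_le_sum fun i _ ↦ (abs_add_le _ _).trans ?_)
        rw [abs_mul, abs_mul, abs_of_nonneg (hb₀ i)]
        exact add_le_add (mul_le_mul_of_nonneg_left (hs i) (abs_nonneg _))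
          (mul_le_mul_of_nonneg_left (hst i) (hb₀ i))
    _ = (∑ i, |a i - b i|) * M + (∑ i, b i) * D := by
        rw [sum_add_distrib, sum_mul, sum_mul]
    _ ≤ (∑ i, |a i - b i|) * M + D := by
        gcongr
        exact mul_le_of_le_one_left hD hb₁

end Softmax

section MixtureOfExperts

variable {d q : ℕ} {Ex : Euc d → Euc q → ℝ} {M : NNReal} {m : ℕ}

lemma abs_moe_le (hM : ∀ x η, |Ex x η| ≤ M) (β : Fin m → ℝ) (ω : Fin m → Euc d)
    (η : Fin m → Euc q) (x : Euc d) : |moe Ex β ω η x| ≤ M := by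
  set a : Fin m → ℝ := fun i ↦ ⟪ω i, x⟫_ℝ + β i
  calc |moe Ex β ω η x| ≤ ∑ i, |softmax a i * Ex x (η i)| := abs_sum_le_sum_abs _ _
    _ ≤ ∑ i, softmax a i * M := by
        gcongr with i
        rw [abs_mul, abs_of_nonneg (softmax_nonneg a i)]
        exact mul_le_mul_of_nonneg_left (hM x (η i)) (softmax_nonneg a i)
    _ ≤ M := by
        rw [← sum_mul]
        exact mul_le_of_le_one_left M.coe_nonneg (sum_softmax_le_one a)

lemma dist_inner_add_le (x : Euc d) (p p' : ℝ × Euc d × Euc q) :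
    dist (⟪p.2.1, x⟫_ℝ + p.1) (⟪p'.2.1, x⟫_ℝ + p'.1) ≤ (‖x‖ + 1) * dist p p' := by
  have hβ : dist p.1 p'.1 ≤ dist p p' := le_max_left _ _
  have hω : dist p.2.1 p'.2.1 ≤ dist p p' := (le_max_left _ _).trans (le_max_right _ _)
  calc dist (⟪p.2.1, x⟫_ℝ + p.1) (⟪p'.2.1, x⟫_ℝ + p'.1)
      ≤ dist ⟪p.2.1, x⟫_ℝ ⟪p'.2.1, x⟫_ℝ + dist p.1 p'.1 := dist_add_add_le _ _ _ _
    _ ≤ dist p.2.1 p'.2.1 * ‖x‖ + dist p.1 p'.1 := by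
        gcongr
        rw [dist_eq_norm, ← inner_sub_left, dist_eq_norm]
        exact norm_inner_le_norm _ _
    _ ≤ dist p p' * ‖x‖ + dist p p' := by gcongr
    _ = (‖x‖ + 1) * dist p p' := by ring

lemma lipschitzWith_moe {L : NNReal} (hM : ∀ x η, |Ex x η| ≤ M)
    (hL : ∀ x, LipschitzWith L (Ex x)) (x : Euc d) :
    LipschitzWith (4 * (‖x‖₊ + 1) * M + L) fun u : Fin m → ℝ × Euc d × Euc q ↦
      moe Ex (fun i ↦ (u i).1) (fun i ↦ (u i).2.1) (fun i ↦ (u i).2.2) x := by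
  set score : (Fin m → ℝ × Euc d × Euc q) → Fin m → ℝ := fun u i ↦ ⟪(u i).2.1, x⟫_ℝ + (u i).1
  have hscore (u w) : dist (score u) (score w) ≤ (‖x‖ + 1) * dist u w := by
    refine (dist_pi_le_iff (by positivity)).2 fun i ↦ (dist_inner_add_le x (u i) (w i)).trans ?_
    gcongr
    exact dist_le_pi_dist u w i
  have hexpert (u w : Fin m → ℝ × Euc d × Euc q) (i : Fin m) :
      |Ex x (u i).2.2 - Ex x (w i).2.2| ≤ L * dist u w := by
    refine ((hL x).dist_le_mul _ _).trans ?_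
    gcongr
    exact (le_max_right _ _).trans ((le_max_right _ _).trans (dist_le_pi_dist u w i))
  refine LipschitzWith.of_dist_le_mul fun u w ↦ ?_
  calc |∑ i, softmax (score u) i * Ex x (u i).2.2 - ∑ i, softmax (score w) i * Ex x (w i).2.2|
      ≤ (∑ i, |softmax (score u) i - softmax (score w) i|) * M + L * dist u w :=
        abs_sum_mul_sub_sum_mul_le (softmax_nonneg _) (sum_softmax_le_one _) (by positivity)
          (fun i ↦ hM x _) (hexpert u w)
    _ ≤ 4 * ((‖x‖ + 1) * dist u w) * M + L * dist u w := by
        grw [sum_abs_softmax_sub_softmax_le, hscore]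
    _ = ↑(4 * (‖x‖₊ + 1) * M + L) * dist u w := by
        push_cast
        ring

lemma hasPolynomialCover_moeOf {k : ℕ} {L : NNReal} (hM : ∀ x η, |Ex x η| ≤ M)
    (hL : ∀ x, LipschitzWith L (Ex x)) {Θ : Set (ℝ × Euc d × Euc q)}
    (hΘ : Bornology.IsBounded Θ) {S : Set (Euc d)} (hS : Bornology.IsBounded S) :
    HasPolynomialCover (moeOf Ex) {p : ParamSpaceM d q k | ∀ i, p.2 i ∈ Θ} S := by
  obtain ⟨R, hR⟩ := hS.exists_norm_le
  refine hasPolynomialCover_sigma fun m ↦ ?_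
  have hT : Bornology.IsBounded {u : Fin (m + 1) → ℝ × Euc d × Euc q | ∀ i, u i ∈ Θ} :=
    (Bornology.IsBounded.pi fun _ ↦ hΘ).subset fun u hu i _ ↦ hu i
  refine hasPolynomialCover_of_lipschitzWith (L := 4 * (R.toNNReal + 1) * M + L) ?_ hT
  intro x hx
  refine (lipschitzWith_moe hM hL x).weaken ?_
  gcongr
  exact NNReal.le_toNNReal_of_coe_le (hR x hx)

end MixtureOfExperts

section FullMeasure

variable {α : Type*} [MeasurableSpace α] {μ : Measure α} [IsProbabilityMeasure μ] {s t : Set α}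

lemma ae_mem_of_measure_eq_one (hs : μ s = 1) (hst : s ⊆ t) (ht : MeasurableSet t) :
    ∀ᵐ x ∂μ, x ∈ t :=
  (mem_ae_iff_prob_eq_one ht).2 (le_antisymm prob_le_one (hs ▸ measure_mono hst))

lemma restrict_eq_self_of_measure_eq_one (hs : μ s = 1) : μ.restrict s = μ := by
  rw [← Measure.restrict_toMeasurable (hs.trans_ne ENNReal.one_ne_top)]
  exact Measure.restrict_eq_self_of_ae_mem
    (ae_mem_of_measure_eq_one hs (subset_toMeasurable μ s) (measurableSet_toMeasurable μ s))

end FullMeasure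

theorem softmax_moe_least_squares_rate_general {d q k K : ℕ} {Ex : Euc d → Euc q → ℝ}
    {Θ : Set (ℝ × Euc d × Euc q)} (hΘ : Bornology.IsBounded Θ)
    {X : Set (Euc d)} (hX : Bornology.IsBounded X)
    {μ : Measure (Euc d)} [IsProbabilityMeasure μ] (hμX : μ X = 1)
    (hbound : ∃ M : ℝ, ∀ x η, |Ex x η| ≤ M)
    (hlip : ∃ L : ℝ, ∀ x η η', |Ex x η - Ex x η'| ≤ L * ‖η - η'‖)
    (βs : Fin K → ℝ) (ωs : Fin K → Euc d) (ηs : Fin K → Euc q) (v : NNReal)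
    {ε : ℝ} (hε : 0 < ε) :
    ∃ C : ℝ, 0 < C ∧ ∀ n : ℕ, 2 ≤ n →
      ∀ Gn : (Fin n → Euc d × ℝ) → ParamSpaceM d q k, Measurable Gn →
        (∀ data i, (Gn data).2 i ∈ Θ) →
        (∀ data, empiricalRisk data (moeOf Ex (Gn data)) ≤
          empiricalRisk data (moe Ex βs ωs ηs)) →
        (Measure.pi fun _ : Fin n ↦ jointLaw μ (moe Ex βs ωs ηs) v)
            {data | C * √(log n / n) <
              √(∫ x in X, (moeOf Ex (Gn data) x - moe Ex βs ωs ηs x) ^ 2 ∂μ)} ≤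
          ENNReal.ofReal ε := by
  obtain ⟨M, hM⟩ := hbound
  lift M to NNReal using (abs_nonneg _).trans (hM 0 0)
  obtain ⟨L, hL⟩ := hlip
  have hL' (x : Euc d) : LipschitzWith L.toNNReal (Ex x) :=
    .of_dist_le' fun η η' ↦ by simpa only [dist_eq_norm] using! hL x η η'
  have hdiff (p : ParamSpaceM d q k) (x : Euc d) :
      |moeOf Ex p x - moe Ex βs ωs ηs x| ≤ M + M :=
    (abs_sub _ _).trans (add_le_add (abs_moe_le hM ..) (abs_moe_le hM ..))
  -- `X` itself may be non-measurable.
  have hXμ : ∀ᵐ x ∂μ, x ∈ closure X :=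
    ae_mem_of_measure_eq_one hμX subset_closure isClosed_closure.measurableSet
  rw [restrict_eq_self_of_measure_eq_one hμX]
  exact exists_rate_of_hasPolynomialCover μ _ v (fun p _ ↦ hdiff p) hXμ
    (hasPolynomialCover_moeOf hM hL' hΘ hX.closure) hε

/-- **Proposition 3.1.**  For data `(X_i, Y_i)` i.i.d. with `X_i ∼ μ` and
`Y_i = f_{G*}(X_i) + ε_i`, `ε_i | X_i ∼ N(0, v)`, any measurable least squares estimator
`Ĝ_n` taking values in `G_k(Θ)` satisfies `‖f_{Ĝ_n} − f_{G*}‖_{L²(μ)} = O_P(√(log n / n))`: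
for every `ε > 0` there is `C > 0` such that for all `n ≥ 2` the probability that
`‖f_{Ĝ_n} − f_{G*}‖_{L²(μ)} > C √(log n / n)` is at most `ε`. -/
theorem softmax_moe_least_squares_rate
    (d q k K : ℕ) (hd : 1 ≤ d) (hq : 1 ≤ q)
    (Ex : Euc d → Euc q → ℝ)
    (Θ : Set (ℝ × Euc d × Euc q)) (hΘ : IsCompact Θ)
    (X : Set (Euc d)) (hX : Bornology.IsBounded X)
    (μ : Measure (Euc d)) [IsProbabilityMeasure μ] (hμX : μ X = 1)
    (hbound : ∃ M : ℝ, ∀ x η, |Ex x η| ≤ M)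
    (hlip : ∃ L : ℝ, ∀ x η η', |Ex x η - Ex x η'| ≤ L * ‖η - η'‖)
    (βs : Fin (K + 1) → ℝ) (ωs : Fin (K + 1) → Euc d) (ηs : Fin (K + 1) → Euc q)
    (hΘs : ∀ j, (βs j, ωs j, ηs j) ∈ Θ)
    (hk : K + 1 < k)
    (v : NNReal) (hv : 0 < v) :
    ∀ ε : ℝ, 0 < ε →
      ∃ C : ℝ, 0 < C ∧ ∀ n : ℕ, 2 ≤ n →
        ∀ Gn : (Fin n → Euc d × ℝ) → ParamSpaceM d q k,
          Measurable Gn →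
          (∀ data i, (Gn data).2 i ∈ Θ) →
          -- `Gn` is a least squares estimator over `G_k(Θ)`:
          (∀ data : Fin n → Euc d × ℝ, ∀ (m : ℕ), 1 ≤ m → m ≤ k →
            ∀ (β : Fin m → ℝ) (ω : Fin m → Euc d) (η : Fin m → Euc q),
              (∀ i, (β i, ω i, η i) ∈ Θ) →
              (∑ i : Fin n, ((data i).2 - moeOf Ex (Gn data) (data i).1) ^ 2) ≤
                ∑ i : Fin n, ((data i).2 - moe Ex β ω η (data i).1) ^ 2) →
          (Measure.pi fun _ : Fin n => jointLaw μ (moe Ex βs ωs ηs) v)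
              {data | C * Real.sqrt (Real.log n / n) <
                Real.sqrt (∫ x in X,
                  (moeOf Ex (Gn data) x - moe Ex βs ωs ηs x) ^ 2 ∂μ)} ≤
            ENNReal.ofReal ε := by
  intro ε hε
  obtain ⟨C, hC, hrate⟩ := softmax_moe_least_squares_rate_general (k := k) hΘ.isBounded hX hμX
    hbound hlip βs ωs ηs v hε
  exact ⟨C, hC, fun n hn Gn hG hGΘ hmin ↦ hrate n hn Gn hG hGΘ fun data ↦
    hmin data (K + 1) (Nat.le_add_left 1 K) hk.le βs ωs ηs hΘs⟩

end
end
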